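/- Let n ≥ 3, 1 ≤ k ≤ n, A diagonal in 𝒜_k (with λ_max(A) < 1/2 when k = 1), x₀ ∈ B_{1/2}(0)∖{0}, and fix c ≥ c* (the constant from the exterior existence result). For 0 < ε₁ < ε₂ < 1/2 let u^{ε₁} and u^{ε₂} be the unique k-convex solutions of the exterior problems S_k(D²u) = 1 in ℝⁿ∖B̄_{ε_i}(x₀), u = 0 on ∂B_{ε_i}(x₀), lim_{|x|→∞}(u(x) − (½xᵀAx + c)) = 0, and let ũ^{ε_i} denote their extensions by 0 on B_{ε_i}(x₀). Then ũ^{ε₁}(x) ≥ ũ^{ε₂}(x) for every x ∈ ℝⁿ. -/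

import Mathlib

open scoped Classical Topology
open Real Filter MeasureTheory

noncomputable section

/-- Euclidean space ℝⁿ. -/
abbrev Euc (n : ℕ) : Type := EuclideanSpace ℝ (Fin n)

/-- The standard basis vector `e i`. -/
def ebasis (n : ℕ) (i : Fin n) : Euc n := EuclideanSpace.single i 1

/-- The Hessian matrix `D²u(x)`. -/
def hessMat (n : ℕ) (u : Euc n → ℝ) (x : Euc n) : Matrix (Fin n) (Fin n) ℝ :=
  Matrix.of fun i j => iteratedFDeriv ℝ 2 u x ![ebasis n i, ebasis n j]

/-- The Laplacian `Δu(x)` (trace of the Hessian). -/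
def lapl (n : ℕ) (u : Euc n → ℝ) (x : Euc n) : ℝ := ∑ i, hessMat n u x i i

/-- The `k`-th elementary symmetric function of the eigenvalues of an `n × n` matrix,
expressed through the coefficients of the characteristic polynomial. -/
def matSk (n k : ℕ) (M : Matrix (Fin n) (Fin n) ℝ) : ℝ :=
  (-1 : ℝ) ^ k * (Matrix.charpoly M).coeff (n - k)

/-- `S_k(D²u)(x)`. -/
def SkHess (n k : ℕ) (u : Euc n → ℝ) (x : Euc n) : ℝ := matSk n k (hessMat n u x)

/-- `u` is `k`-convex on `U`: the eigenvalues of the Hessian lie in the Gårding cone `Γ_k`. -/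
def KConvexOn (n k : ℕ) (u : Euc n → ℝ) (U : Set (Euc n)) : Prop :=
  ∀ x ∈ U, ∀ j : ℕ, 1 ≤ j → j ≤ k → 0 < matSk n j (hessMat n u x)

/-- Membership in the class `𝒜_k`: symmetric positive definite with `S_k(λ(A)) = 1`. -/
def MemA (n k : ℕ) (A : Matrix (Fin n) (Fin n) ℝ) : Prop :=
  A.IsSymm ∧ A.PosDef ∧ matSk n k A = 1

/-- The quadratic form `½ xᵀ A x`. -/
def quadA (n : ℕ) (A : Matrix (Fin n) (Fin n) ℝ) (x : Euc n) : ℝ :=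
  (1 / 2) * ∑ i, ∑ j, x i * A i j * x j

/-- The linear form `b ⋅ x`. -/
def linB (n : ℕ) (b x : Euc n) : ℝ := ∑ i, b i * x i

/-- `λ_max(A) < c`, expressed through the quadratic form (for symmetric `A`). -/
def lambdaMaxLT (n : ℕ) (A : Matrix (Fin n) (Fin n) ℝ) (c : ℝ) : Prop :=
  ∀ x : Euc n, x ≠ 0 → ∑ i, ∑ j, x i * A i j * x j < c * ‖x‖ ^ 2

/-- `u` is smooth on an open neighbourhood of the (closed) set `S`;
this is our rendering of `u ∈ C^∞(S)` for a closed set `S`. -/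
def SmoothOnNhd (n : ℕ) (u : Euc n → ℝ) (S : Set (Euc n)) : Prop :=
  ∃ U : Set (Euc n), IsOpen U ∧ S ⊆ U ∧ ContDiffOn ℝ (⊤ : ℕ∞) u U

/-- A smooth bounded strictly convex domain in ℝⁿ. -/
def SmoothStrictConvexDomain (n : ℕ) (Ω : Set (Euc n)) : Prop :=
  IsOpen Ω ∧ Bornology.IsBounded Ω ∧ Ω.Nonempty ∧ Convex ℝ Ω ∧ StrictConvex ℝ Ω ∧
    ∃ f : Euc n → ℝ, ContDiff ℝ (⊤ : ℕ∞) f ∧ Ω = {x | f x < 0} ∧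
      ∀ x ∈ frontier Ω, fderiv ℝ f x ≠ 0

/-- Extension of `u` by the constant value `v` inside `Ω`. -/
def extBy (n : ℕ) (Ω : Set (Euc n)) (v : ℝ) (u : Euc n → ℝ) : Euc n → ℝ :=
  fun x => if x ∈ Ω then v else u x

/-- `u` (vanishing on `∂Ω`) is quasiconvex: all sublevel sets of its zero-extension are convex. -/
def QuasiconvexSol (n : ℕ) (Ω : Set (Euc n)) (u : Euc n → ℝ) : Prop :=
  ∀ t : ℝ, Convex ℝ {x : Euc n | extBy n Ω 0 u x ≤ t}

/-- The `k`-th elementary symmetric polynomial of a vector `a ∈ ℝⁿ`. -/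
def esymmVec (n k : ℕ) (a : Fin n → ℝ) : ℝ :=
  ∑ s ∈ Finset.powersetCard k (Finset.univ : Finset (Fin n)), ∏ i ∈ s, a i

/-- `h_k(a) = max_i S_{k-1}(a)|_{a_i = 0} · a_i`. -/
def hkfun (n k : ℕ) (a : Fin n → ℝ) : ℝ :=
  ⨆ i : Fin n, esymmVec n (k - 1) (Function.update a i 0) * a i

/-- The exponent `-k / (2 h_k(a))`. -/
def genExp (n k : ℕ) (a : Fin n → ℝ) : ℝ := -(k : ℝ) / (2 * hkfun n k a)

/-- The integrand `(1 + α t^{-k/(2h_k(a))})^{1/k}`. -/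
def genInt (n k : ℕ) (a : Fin n → ℝ) (α t : ℝ) : ℝ :=
  (1 + α * t ^ genExp n k a) ^ ((1 : ℝ) / (k : ℝ))

/-- The generalized symmetric function `ū`. -/
def ubar (n k : ℕ) (a : Fin n → ℝ) (R₀ α : ℝ) (x : Euc n) : ℝ :=
  ∫ t in R₀..(quadA n (Matrix.diagonal a) x), genInt n k a α t

/-- `μ(α) = ∫_{R₀}^∞ ((1 + α t^{-k/(2h_k(a))})^{1/k} - 1) dt - R₀`. -/
def muA (n k : ℕ) (a : Fin n → ℝ) (R₀ α : ℝ) : ℝ :=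
  (∫ t in Set.Ioi R₀, (genInt n k a α t - 1)) - R₀

/-- The ellipsoid `E_R(xb) = {x : ½ (x - xb)ᵀ A (x - xb) < R}`. -/
def ESet (n : ℕ) (A : Matrix (Fin n) (Fin n) ℝ) (xb : Euc n) (R : ℝ) : Set (Euc n) :=
  {x : Euc n | quadA n A (x - xb) < R}

/-- The non-concentric convex ring `Ω_R^ε = E_R(0) ∖ B̄_ε(x₀)`. -/
def OmegaRe (n : ℕ) (a : Fin n → ℝ) (x₀ : Euc n) (ε R : ℝ) : Set (Euc n) :=
  ESet n (Matrix.diagonal a) 0 R \ closure (Metric.ball x₀ ε)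

/-- `u` is a `k`-convex solution of the approximating problem
`S_k(D²u) = 1` in `Ω_R^ε`, `u = 0` on `∂B_ε(x₀)`, `u = ū` on `∂E_R(0)`. -/
def ApproxSol (n k : ℕ) (a : Fin n → ℝ) (x₀ : Euc n) (ε R R₀ α : ℝ)
    (u : Euc n → ℝ) : Prop :=
  SmoothOnNhd n u (closure (OmegaRe n a x₀ ε R)) ∧
  KConvexOn n k u (OmegaRe n a x₀ ε R) ∧
  (∀ x ∈ OmegaRe n a x₀ ε R, SkHess n k u x = 1) ∧
  (∀ x ∈ Metric.sphere x₀ ε, u x = 0) ∧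
  (∀ x : Euc n, quadA n (Matrix.diagonal a) x = R → u x = ubar n k a R₀ α x)

/-- The constant `C_ε` of the boundary gradient estimate. -/
def Ceps (n k : ℕ) (C ε : ℝ) : ℝ :=
  if 2 * k < n then C * ((n : ℝ) / (k : ℝ) - 2) * ε⁻¹
  else if 2 * k = n then C * ε⁻¹ * |Real.log ε|⁻¹
  else C * (2 - (n : ℝ) / (k : ℝ)) * ε ^ (1 - (n : ℝ) / (k : ℝ))

/-- `u` is a `k`-convex solution of the exterior Dirichlet problem
`S_k(D²u) = 1` in `ℝⁿ ∖ B̄_ε(x₀)`, `u = 0` on `∂B_ε(x₀)`, with quadratic asymptotics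
`½ xᵀAx + c` at infinity (`A = diag a`). -/
def ExtBallSol (n k : ℕ) (a : Fin n → ℝ) (x₀ : Euc n) (ε c : ℝ) (u : Euc n → ℝ) : Prop :=
  SmoothOnNhd n u (Metric.ball x₀ ε)ᶜ ∧
  KConvexOn n k u (closure (Metric.ball x₀ ε))ᶜ ∧
  (∀ x ∈ (closure (Metric.ball x₀ ε))ᶜ, SkHess n k u x = 1) ∧
  (∀ x ∈ Metric.sphere x₀ ε, u x = 0) ∧
  Tendsto (fun x : Euc n => u x - (quadA n (Matrix.diagonal a) x + c))
    (cocompact (Euc n)) (𝓝 0)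

/-- `u` is a `k`-convex solution of the exterior Dirichlet problem on `ℝⁿ ∖ Ω₀` with
asymptotics `½ xᵀAx + b·x + c` at infinity. -/
def ExtDomSol (n k : ℕ) (Ω₀ : Set (Euc n)) (A : Matrix (Fin n) (Fin n) ℝ) (b : Euc n)
    (c : ℝ) (u : Euc n → ℝ) : Prop :=
  SmoothOnNhd n u Ω₀ᶜ ∧
  KConvexOn n k u (closure Ω₀)ᶜ ∧
  (∀ x ∈ (closure Ω₀)ᶜ, SkHess n k u x = 1) ∧
  (∀ x ∈ frontier Ω₀, u x = 0) ∧
  Tendsto (fun x : Euc n => u x - (quadA n A x + linB n b x + c))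
    (cocompact (Euc n)) (𝓝 0)

/-- `u` is a solution of the exterior Dirichlet problem for the Laplace equation
`Δu = 1` on `ℝⁿ ∖ Ω₀` with asymptotics `½ xᵀAx + b·x + c` at infinity. -/
def ExtDomSolLap (n : ℕ) (Ω₀ : Set (Euc n)) (A : Matrix (Fin n) (Fin n) ℝ) (b : Euc n)
    (c : ℝ) (u : Euc n → ℝ) : Prop :=
  SmoothOnNhd n u Ω₀ᶜ ∧
  (∀ x ∈ (closure Ω₀)ᶜ, lapl n u x = 1) ∧
  (∀ x ∈ frontier Ω₀, u x = 0) ∧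
  Tendsto (fun x : Euc n => u x - (quadA n A x + linB n b x + c))
    (cocompact (Euc n)) (𝓝 0)

/-- `u` solves the exterior problem `Δu = 0` in `ℝⁿ ∖ Ω̄`, `u = 1` on `∂Ω`,
`u → 0` at infinity. -/
def HarmExtSol (n : ℕ) (Ω : Set (Euc n)) (u : Euc n → ℝ) : Prop :=
  SmoothOnNhd n u Ωᶜ ∧
  (∀ x ∈ (closure Ω)ᶜ, lapl n u x = 0) ∧
  (∀ x ∈ frontier Ω, u x = 1) ∧
  Tendsto u (cocompact (Euc n)) (𝓝 0)

end

open Polynomial in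
lemma splits_derivative_real {p : ℝ[X]} (hp : p.Splits) : (derivative p).Splits := by
  rw [splits_iff_card_roots] at hp ⊢
  have h1 := card_roots_le_derivative p
  have h2 := natDegree_derivative_le p
  have h3 := (derivative p).card_roots'
  omega

open Polynomial in
lemma laguerre_zero {p : ℝ[X]} (hp : p.Splits) : 2 * (p.coeff 0 * p.coeff 2) ≤ p.coeff 1 ^ 2 := by
  have key : ∀ s : Multiset ℝ, ∀ c : ℝ,
      2 * ((C c * (s.map (fun a => X - C a)).prod).coeff 0 *
        (C c * (s.map (fun a => X - C a)).prod).coeff 2) ≤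
      (C c * (s.map (fun a => X - C a)).prod).coeff 1 ^ 2 := by
    intro s c
    induction s using Multiset.induction_on with
    | empty => simp [coeff_C]
    | cons a s ih =>
      simp only [Multiset.map_cons, Multiset.prod_cons]
      rw [show C c * ((X - C a) * (s.map (fun a => X - C a)).prod) =
        (X - C a) * (C c * (s.map (fun a => X - C a)).prod) by ring]
      set q := C c * (s.map (fun a => X - C a)).prod
      simp only [sub_mul, coeff_sub, coeff_C_mul, coeff_X_mul, coeff_X_mul_zero]
      nlinarith [sq_nonneg (q.coeff 0), mul_nonneg (sq_nonneg a) (sub_nonneg.2 ih)]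
  have := key p.roots p.leadingCoeff
  rwa [← hp.eq_prod_roots] at this

open Polynomial in
lemma newton_coeff {p : ℝ[X]} (hp : p.Splits) (k : ℕ) :
    p.coeff k * p.coeff (k + 2) ≤ p.coeff (k + 1) ^ 2 := by
  have hs : ∀ k, (derivative^[k] p).Splits := by
    intro k
    induction k with
    | zero => simpa using hp
    | succ k ih => rw [Function.iterate_succ_apply']; exact splits_derivative_real ih
  have h := laguerre_zero (hs k)
  simp only [coeff_iterate_derivative, nsmul_eq_mul] at h
  rw [show 0 + k = k by ring, show 2 + k = k + 2 by ring, show 1 + k = k + 1 by ring,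
    Nat.descFactorial_self] at h
  have e1 : ((k + 1).descFactorial k : ℝ) = (k.factorial : ℝ) * (k + 1) := by
    have := Nat.factorial_mul_descFactorial (show k ≤ k + 1 by omega)
    simp [Nat.factorial_succ] at this
    rw [this]; push_cast; ring
  have e2 : ((k + 2).descFactorial k : ℝ) * 2 = (k.factorial : ℝ) * (k + 1) * (k + 2) := by
    have := Nat.factorial_mul_descFactorial (show k ≤ k + 2 by omega)
    simp [Nat.factorial_succ] at this
    have h' : (2 * ((k+2).descFactorial k) : ℝ) = (k + 1 + 1) * ((k + 1) * k.factorial) := by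
      exact_mod_cast this
    linarith
  rw [e1] at h
  by_cases hneg : p.coeff k * p.coeff (k + 2) ≤ 0
  · exact hneg.trans (sq_nonneg _)
  push Not at hneg
  have hf : (0 : ℝ) < k.factorial := by positivity
  have h2 : (k.factorial : ℝ) ^ 2 * (k + 1) * ((k + 2) * (p.coeff k * p.coeff (k + 2))) ≤
     (k.factorial : ℝ) ^ 2 * (k + 1) * ((k + 1) * p.coeff (k + 1) ^ 2) := by
    calc _ = 2 * ((k.factorial : ℝ) * p.coeff k * (((k + 2).descFactorial k : ℝ) * p.coeff (k + 2))) := by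
          linear_combination (-(k.factorial : ℝ) * p.coeff k * p.coeff (k+2)) * e2
      _ ≤ _ := h
      _ = _ := by ring
  have h3 := le_of_mul_le_mul_left h2 (by positivity)
  have : (0:ℝ) < k + 1 := by positivity
  nlinarith

open Matrix Polynomial in
lemma det_rank_one {m : Type*} [Fintype m] [DecidableEq m] (M : Matrix m m ℝ[X]) (u v : m → ℝ[X])
    (h : M.det ≠ 0) : (M + vecMulVec u v).det = M.det + v ⬝ᵥ (M.adjugate *ᵥ u) := by
  let f := algebraMap ℝ[X] (FractionRing ℝ[X])
  have hf : Function.Injective f := IsFractionRing.injective _ _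
  apply hf
  rw [RingHom.map_det]
  have hdet : (f.mapMatrix M).det = f M.det := (RingHom.map_det f M).symm
  have hd : (f.mapMatrix M).det ≠ 0 := by
    rw [hdet]; exact fun h0 => h (hf (by rw [h0, map_zero]))
  have h1 : f.mapMatrix (M + vecMulVec u v) = f.mapMatrix M +
      replicateCol Unit (f ∘ u) * replicateRow Unit (f ∘ v) := by
    ext i j
    simp [vecMulVec_apply, Matrix.mul_apply]
  rw [h1, det_add_replicateCol_mul_replicateRow (IsUnit.mk0 _ hd)]
  rw [Matrix.inv_def, ← RingHom.map_adjugate, hdet]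
  have h2 : f M.det ≠ 0 := hdet ▸ hd
  simp [Matrix.det_unique, Matrix.mul_apply, dotProduct, mulVec, Finset.sum_mul, Finset.mul_sum,
    Matrix.add_apply, mul_add]
  rw [Finset.sum_comm]
  refine Finset.sum_congr rfl fun i _ => Finset.sum_congr rfl fun j _ => ?_
  field_simp

lemma chain_real (k : ℕ) (a b : ℕ → ℝ) (hb0 : b 0 = 0) (hb1 : 0 < b 1)
    (ha : ∀ j ≤ k, 0 < a j)
    (hN : ∀ s : ℝ, ∀ j, j + 2 ≤ k →
      (a j + s * b j) * (a (j+2) + s * b (j+2)) ≤ (a (j+1) + s * b (j+1)) ^ 2) :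
    ∀ j, j < k → 0 < b (j+1) ∧ a (j+1) * b j < a j * b (j+1) := by
  intro j
  induction j with
  | zero =>
    intro hj
    refine ⟨hb1, ?_⟩
    rw [hb0, mul_zero]; exact mul_pos (ha 0 (by omega)) hb1
  | succ j ih =>
    intro hj
    obtain ⟨h1, hF⟩ := ih (by omega)
    have a1 := ha (j+1) (by omega)
    have a2 := ha (j+2) (by omega)
    have a0 := ha j (by omega)
    have hN' := fun s => hN s j (by omega)
    show 0 < b (j+2) ∧ a (j+2) * b (j+1) < a (j+1) * b (j+2)
    generalize a j = A0 at *
    generalize a (j+1) = A1 at *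
    generalize a (j+2) = A2 at *
    generalize b j = B0 at *
    generalize b (j+1) = B1 at *
    generalize b (j+2) = B2 at *
    have hN2 : ∀ t : ℝ, ((A0 * B1 - A1 * B0) + t * B0) * ((A2 * B1 - A1 * B2) + t * B2) ≤
        (t * B1) ^ 2 := by
      intro t
      have := hN' ((t - A1) / B1)
      have h2 := mul_le_mul_of_nonneg_left this (sq_nonneg B1)
      have e1 : B1 ^ 2 * ((A0 + (t - A1) / B1 * B0) * (A2 + (t - A1) / B1 * B2)) =
        ((A0 * B1 - A1 * B0) + t * B0) * ((A2 * B1 - A1 * B2) + t * B2) := by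
        field_simp; ring
      have e2 : B1 ^ 2 * (A1 + (t - A1) / B1 * B1) ^ 2 = (t * B1) ^ 2 := by
        field_simp; ring
      rw [e1, e2] at h2; exact h2
    have hF0 : 0 < A0 * B1 - A1 * B0 := by linarith
    set F := A0 * B1 - A1 * B0
    have hle : A2 * B1 ≤ A1 * B2 := by
      have := hN2 0
      simp only [zero_mul, add_zero] at this
      by_contra hc
      push Not at hc
      have := mul_pos hF0 (sub_pos.2 hc)
      nlinarith
    have hB2 : 0 < B2 := by
      have : 0 < A1 * B2 := lt_of_lt_of_le (mul_pos a2 h1) hle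
      exact (pos_iff_pos_of_mul_pos this).1 a1
    refine ⟨hB2, lt_of_le_of_ne hle ?_⟩
    intro heq
    have h3 : ∀ t : ℝ, 0 < t → F * B2 ≤ t * (B1 ^ 2 - B0 * B2) := by
      intro t ht
      have := hN2 t
      rw [heq, sub_self, zero_add] at this
      have h4 : t * (F * B2) ≤ t * (t * (B1 ^ 2 - B0 * B2)) := by nlinarith
      exact le_of_mul_le_mul_left h4 ht
    have hFB : 0 < F * B2 := mul_pos hF0 hB2
    have hD : 0 < 1 + |B1 ^ 2 - B0 * B2| := by positivity
    have h5 := h3 (F * B2 / (1 + |B1 ^ 2 - B0 * B2|)) (by positivity)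
    rw [div_mul_eq_mul_div, le_div_iff₀ hD] at h5
    have h6 := le_abs_self (B1 ^ 2 - B0 * B2)
    nlinarith

open Matrix Polynomial in
/-- the polynomial coefficient governing rank one updates -/
noncomputable def rkQ (n : ℕ) (N : Matrix (Fin n) (Fin n) ℝ) (v : Fin n → ℝ) : ℝ[X] :=
  (fun i => C (v i)) ⬝ᵥ ((charmatrix N).adjugate *ᵥ (fun i => C (v i)))

noncomputable def rkB (n : ℕ) (N : Matrix (Fin n) (Fin n) ℝ) (v : Fin n → ℝ) (j : ℕ) : ℝ :=
  -((-1) ^ j * (rkQ n N v).coeff (n - j))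

open Matrix Polynomial in
lemma charpoly_rank_one (n : ℕ) (N : Matrix (Fin n) (Fin n) ℝ) (v : Fin n → ℝ) (s : ℝ) :
    (N + s • vecMulVec v v).charpoly = N.charpoly + C (-s) * rkQ n N v := by
  have h1 : charmatrix (N + s • vecMulVec v v) = charmatrix N +
      vecMulVec (C (-s) • (fun i => C (v i))) (fun i => C (v i)) := by
    ext1 i j
    simp [charmatrix_apply, vecMulVec_apply]
    ring
  rw [Matrix.charpoly, h1, det_rank_one _ _ _ (N.charpoly_monic.ne_zero), Matrix.mulVec_smul,
    dotProduct_smul]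
  rfl

lemma matSk_rank_one (n : ℕ) (N : Matrix (Fin n) (Fin n) ℝ) (v : Fin n → ℝ) (s : ℝ) (j : ℕ) :
    matSk n j (N + s • Matrix.vecMulVec v v) = matSk n j N + s * rkB n N v j := by
  unfold matSk rkB
  rw [charpoly_rank_one, Polynomial.coeff_add, Polynomial.coeff_C_mul]; ring

lemma matSk_zero (n : ℕ) (N : Matrix (Fin n) (Fin n) ℝ) : matSk n 0 N = 1 := by
  have := N.charpoly_monic.coeff_natDegree
  rw [Matrix.charpoly_natDegree_eq_dim, Fintype.card_fin] at this
  simp [matSk, this]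

lemma matSk_one (n : ℕ) (hn : 1 ≤ n) (N : Matrix (Fin n) (Fin n) ℝ) : matSk n 1 N = N.trace := by
  have : Nonempty (Fin n) := ⟨⟨0, hn⟩⟩
  rw [Matrix.trace_eq_neg_charpoly_coeff]
  simp [matSk]

lemma rkB_zero (n : ℕ) (N : Matrix (Fin n) (Fin n) ℝ) (v : Fin n → ℝ) : rkB n N v 0 = 0 := by
  have := matSk_rank_one n N v 1 0
  rw [matSk_zero, matSk_zero] at this; linarith

lemma rkB_one (n : ℕ) (hn : 1 ≤ n) (N : Matrix (Fin n) (Fin n) ℝ) (v : Fin n → ℝ) :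
    rkB n N v 1 = ∑ i, v i ^ 2 := by
  have := matSk_rank_one n N v 1 1
  rw [matSk_one n hn, matSk_one n hn, Matrix.trace_add] at this
  have h2 : (Matrix.trace ((1:ℝ) • Matrix.vecMulVec v v)) = ∑ i, v i ^ 2 := by
    simp [Matrix.trace, Matrix.vecMulVec_apply, sq]
  linarith

lemma newton_matSk (n : ℕ) (N : Matrix (Fin n) (Fin n) ℝ) (hN : N.IsHermitian) (j : ℕ)
    (hj : j + 2 ≤ n) : matSk n j N * matSk n (j+2) N ≤ matSk n (j+1) N ^ 2 := by
  have := newton_coeff hN.splits_charpoly (n - (j + 2))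
  unfold matSk
  rw [show n - (j+2) + 2 = n - j by omega, show n - (j+2) + 1 = n - (j+1) by omega] at this
  have e : ((-1 : ℝ) ^ j) * (-1) ^ j = 1 := by rw [← mul_pow]; simp
  rw [pow_add, pow_add]
  calc _ = ((-1 : ℝ) ^ j * (-1) ^ j) * (N.charpoly.coeff (n - (j+2)) * N.charpoly.coeff (n - j)) := by ring
    _ ≤ N.charpoly.coeff (n - (j+1)) ^ 2 := by rw [e, one_mul]; exact this
    _ = ((-1 : ℝ) ^ j * (-1) ^ j) * N.charpoly.coeff (n - (j+1)) ^ 2 := by rw [e, one_mul]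
    _ = _ := by ring

/-- Gårding cone -/
def InG (n k : ℕ) (N : Matrix (Fin n) (Fin n) ℝ) : Prop :=
  ∀ j : ℕ, 1 ≤ j → j ≤ k → 0 < matSk n j N

lemma herm_rank_one (n : ℕ) (N : Matrix (Fin n) (Fin n) ℝ) (hN : N.IsHermitian) (v : Fin n → ℝ)
    (s : ℝ) : (N + s • Matrix.vecMulVec v v).IsHermitian := by
  ext i j
  have := hN.apply i j
  simp [Matrix.vecMulVec_apply] at this ⊢
  rw [this]; ring

lemma chain_mat (n k : ℕ) (hkn : k ≤ n) (hn : 1 ≤ n) (N : Matrix (Fin n) (Fin n) ℝ) (hN : N.IsHermitian)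
    (hG : InG n k N) (v : Fin n → ℝ) (hv : v ≠ 0) :
    ∀ j, j < k → 0 < rkB n N v (j+1) ∧
      matSk n (j+1) N * rkB n N v j < matSk n j N * rkB n N v (j+1) := by
  apply chain_real k (fun j => matSk n j N) (rkB n N v) (rkB_zero n N v)
  · rw [rkB_one n hn]
    obtain ⟨i, hi⟩ := Function.ne_iff.1 hv
    exact Finset.sum_pos' (fun i _ => sq_nonneg _) ⟨i, Finset.mem_univ _, by
      have : v i ≠ 0 := hi
      positivity⟩
  · intro j hj
    rcases Nat.eq_zero_or_pos j with rfl | h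
    · simp [matSk_zero]
    · exact hG j h hj
  · intro s j hj
    have := newton_matSk n _ (herm_rank_one n N hN v s) j (by omega)
    simpa only [matSk_rank_one] using this

/-- positive rank-one updates stay in the cone and strictly increase -/
lemma rank_one_up (n k : ℕ) (hkn : k ≤ n) (hk : 1 ≤ k) (N : Matrix (Fin n) (Fin n) ℝ)
    (hN : N.IsHermitian) (hG : InG n k N) (v : Fin n → ℝ) (hv : v ≠ 0) (s : ℝ) (hs : 0 < s) :
    InG n k (N + s • Matrix.vecMulVec v v) ∧
      matSk n k N < matSk n k (N + s • Matrix.vecMulVec v v) := by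
  have h := chain_mat n k hkn (hk.trans hkn) N hN hG v hv
  constructor
  · intro j h1 h2
    rw [matSk_rank_one]
    obtain ⟨i, rfl⟩ : ∃ i, j = i + 1 := ⟨j - 1, by omega⟩
    have := (h i (by omega)).1
    have := hG _ h1 h2
    positivity
  · rw [matSk_rank_one]
    obtain ⟨i, rfl⟩ : ∃ i, k = i + 1 := ⟨k - 1, by omega⟩
    have := (h i (by omega)).1
    have := mul_pos hs this
    linarith

/-- negative updates: only the last one matters -/
lemma rank_one_down (n k : ℕ) (hkn : k ≤ n) (hk : 1 ≤ k) (N : Matrix (Fin n) (Fin n) ℝ)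
    (hN : N.IsHermitian) (hG : InG n k N) (v : Fin n → ℝ) (s : ℝ) (hs : s ≤ 0)
    (hpos : 0 < matSk n k (N + s • Matrix.vecMulVec v v)) :
    InG n k (N + s • Matrix.vecMulVec v v) := by
  by_cases hv : v = 0
  · subst hv
    have : N + s • Matrix.vecMulVec (0 : Fin n → ℝ) 0 = N := by
      ext i j; simp [Matrix.vecMulVec_apply]
    rw [this]; exact hG
  have h := chain_mat n k hkn (hk.trans hkn) N hN hG v hv
  -- downward induction
  have key : ∀ d, d < k → 0 < matSk n (k - d) (N + s • Matrix.vecMulVec v v) := by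
    intro d
    induction d with
    | zero => intro _; simpa using hpos
    | succ d ih =>
      intro hd
      have h1 := ih (by omega)
      obtain ⟨i, hi⟩ : ∃ i, k - (d + 1) = i := ⟨_, rfl⟩
      have hi2 : k - d = i + 1 := by omega
      rw [hi]; rw [hi2] at h1
      rw [matSk_rank_one] at h1 ⊢
      have h2 := (h i (by omega)).2
      have a1 := hG (i+1) (by omega) (by omega)
      have a0 := hG i (by omega) (by omega)
      by_contra hc
      push Not at hc
      have := mul_pos a0 h1
      have h4 := mul_nonneg a1.le (neg_nonneg.2 hc)
      nlinarith
  intro j h1 h2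
  have := key (k - j) (by omega)
  rwa [show k - (k - j) = j by omega] at this

open Matrix in
lemma posDef_up (n k : ℕ) (hkn : k ≤ n) (hk : 1 ≤ k) (N P : Matrix (Fin n) (Fin n) ℝ)
    (hN : N.IsHermitian) (hG : InG n k N) (hP : P.PosDef) :
    matSk n k N < matSk n k (N + P) := by
  have hH := hP.isHermitian
  let w : Fin n → Fin n → ℝ := fun i => ⇑(hH.eigenvectorBasis i)
  have hdec : P = ∑ i, hH.eigenvalues i • vecMulVec (w i) (w i) := by
    ext r t
    conv_lhs => rw [hH.spectral_theorem, Unitary.conjStarAlgAut_apply]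
    rw [Matrix.mul_apply]
    simp only [Matrix.mul_diagonal, Matrix.sum_apply, Matrix.smul_apply,
      vecMulVec_apply, smul_eq_mul]
    refine Finset.sum_congr rfl fun i _ => ?_
    simp [Matrix.star_apply, w]
    ring
  have key : ∀ S : Finset (Fin n), 
     (N + ∑ i ∈ S, hH.eigenvalues i • vecMulVec (w i) (w i)).IsHermitian ∧
     InG n k (N + ∑ i ∈ S, hH.eigenvalues i • vecMulVec (w i) (w i)) ∧
     matSk n k N ≤ matSk n k (N + ∑ i ∈ S, hH.eigenvalues i • vecMulVec (w i) (w i)) ∧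
     (S.Nonempty → matSk n k N < matSk n k (N + ∑ i ∈ S, hH.eigenvalues i • vecMulVec (w i) (w i))) := by
    intro S
    induction S using Finset.induction_on with
    | empty => simpa using ⟨hN, hG⟩
    | insert i S hi ih =>
      obtain ⟨h1, h2, h3, -⟩ := ih
      rw [Finset.sum_insert hi]
      have e : N + (hH.eigenvalues i • vecMulVec (w i) (w i) + ∑ i ∈ S, hH.eigenvalues i • vecMulVec (w i) (w i)) = (N + ∑ i ∈ S, hH.eigenvalues i • vecMulVec (w i) (w i)) + hH.eigenvalues i • vecMulVec (w i) (w i) := by abel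
      rw [e]
      have hw : w i ≠ 0 := by
        intro h0
        have h1 := hH.eigenvectorBasis.orthonormal.ne_zero i
        apply h1
        ext t
        exact congrFun h0 t
      have := rank_one_up n k hkn hk _ h1 h2 (w i) hw _ (hP.eigenvalues_pos i)
      exact ⟨herm_rank_one n _ h1 _ _, this.1, h3.trans this.2.le, fun _ => h3.trans_lt this.2⟩
  conv_rhs => rw [hdec]
  have : Nonempty (Fin n) := ⟨⟨0, by omega⟩⟩
  exact (key Finset.univ).2.2.2 Finset.univ_nonempty

open Matrix Polynomial in
lemma matSk_smul (n j : ℕ) (hj : j ≤ n) (g : ℝ) (hg : g ≠ 0) (M : Matrix (Fin n) (Fin n) ℝ) :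
    matSk n j (g • M) = g ^ j * matSk n j M := by
  have h1 : (g • M).charpoly.comp (C g * X) = C (g ^ n) * M.charpoly := by
    apply Polynomial.funext
    intro x
    simp only [eval_comp, eval_mul, eval_C, eval_X, Matrix.eval_charpoly]
    have : Matrix.scalar (Fin n) (g * x) - g • M = g • (Matrix.scalar (Fin n) x - M) := by
      ext i j
      simp [Matrix.scalar_apply, Matrix.diagonal_apply, mul_sub]
    rw [this, Matrix.det_smul, Fintype.card_fin]
  have h2 := congrArg (fun p => Polynomial.coeff p (n - j)) h1
  simp only [comp_C_mul_X_coeff, coeff_C_mul] at h2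
  have h3 : g ^ n = g ^ j * g ^ (n - j) := by rw [← pow_add]; congr 1; omega
  rw [h3] at h2
  have h4 : (g • M).charpoly.coeff (n - j) = g ^ j * M.charpoly.coeff (n - j) := by
    have := pow_ne_zero (n - j) hg
    apply mul_right_cancel₀ this
    rw [h2]; ring
  unfold matSk
  rw [h4]; ring

open Matrix Polynomial in
lemma matSk_diagonal (n j : ℕ) (hj : j ≤ n) (a : Fin n → ℝ) :
    matSk n j (diagonal a) = ∑ t ∈ Finset.powersetCard j Finset.univ, ∏ i ∈ t, a i := by
  unfold matSk
  rw [Matrix.charpoly_diagonal]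
  have h := Multiset.prod_X_sub_C_coeff (Finset.univ.val.map a) (k := n - j) (by simp)
  have h' : (∏ i, (X - C (a i))) = ((Finset.univ.val.map a).map (fun t => X - C t)).prod := by
    rw [Multiset.map_map]; rfl
  rw [h', h]
  simp only [Multiset.card_map, Finset.card_val, Finset.card_univ, Fintype.card_fin]
  rw [show n - (n - j) = j by omega, Finset.esymm_map_val, ← mul_assoc, ← mul_pow]
  simp

open Matrix Polynomial in
lemma rkB_diagonal (n : ℕ) (a v : Fin n → ℝ) (j : ℕ) :
    rkB n (diagonal a) v j = ∑ i, v i ^ 2 * rkB n (diagonal a) (Pi.single i 1) j := by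
  have hc : charmatrix (diagonal a) = diagonal (fun i => (X - C (a i))) := by
    ext1 i j
    by_cases h : i = j
    · subst h; simp [charmatrix_apply]
    · simp [charmatrix_apply, h]
  have hq : ∀ v : Fin n → ℝ, rkQ n (diagonal a) v =
      ∑ i, C (v i ^ 2) * ∏ l ∈ Finset.univ.erase i, (X - C (a l)) := by
    intro v
    unfold rkQ
    rw [hc, adjugate_diagonal, dotProduct]
    refine Finset.sum_congr rfl fun i _ => ?_
    rw [mulVec_diagonal, C_pow]; ring
  have hq1 : ∀ i : Fin n, rkQ n (diagonal a) (Pi.single i 1) =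
      ∏ l ∈ Finset.univ.erase i, (X - C (a l)) := by
    intro i
    rw [hq, Finset.sum_eq_single i]
    · simp
    · intro b _ hb; simp [Pi.single_apply, hb]
    · simp
  unfold rkB
  simp only [hq1]
  rw [hq, Polynomial.finset_sum_coeff, Finset.mul_sum, ← Finset.sum_neg_distrib]
  refine Finset.sum_congr rfl fun i _ => ?_
  rw [coeff_C_mul]; ring

lemma diag_pos (n k : ℕ) (a : Fin n → ℝ) (hA : MemA n k (Matrix.diagonal a)) (i : Fin n) :
    0 < a i := by
  exact Matrix.posDef_diagonal_iff.1 hA.2.1 i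

lemma matSk_diag_pos (n j : ℕ) (hj : j ≤ n) (a : Fin n → ℝ) (ha : ∀ i, 0 < a i) :
    0 < matSk n j (Matrix.diagonal a) := by
  rw [matSk_diagonal n j hj]
  apply Finset.sum_pos
  · intro t _; exact Finset.prod_pos fun i _ => ha i
  · rw [Finset.powersetCard_nonempty]; simpa using hj

lemma inG_diag (n k : ℕ) (hk : k ≤ n) (a : Fin n → ℝ) (ha : ∀ i, 0 < a i) :
    InG n k (Matrix.diagonal a) := fun j _ h2 => matSk_diag_pos n j (h2.trans hk) a ha

lemma matSk_id (n k : ℕ) (hk : k ≤ n) : InG n k (1 : Matrix (Fin n) (Fin n) ℝ) ∧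
    1 ≤ matSk n k (1 : Matrix (Fin n) (Fin n) ℝ) := by
  rw [← Matrix.diagonal_one]
  refine ⟨inG_diag n k hk _ (fun _ => by simp), ?_⟩
  rw [matSk_diagonal n k hk]
  simp
  exact Nat.choose_pos hk

/-- removing an eigenvalue -/
lemma aT_le (n k : ℕ) (hk1 : 1 ≤ k) (hk : k ≤ n) (a : Fin n → ℝ) (hA : MemA n k (Matrix.diagonal a))
    (i : Fin n) : a i * rkB n (Matrix.diagonal a) (Pi.single i 1) k ≤ 1 ∧
      (k < n → a i * rkB n (Matrix.diagonal a) (Pi.single i 1) k < 1) := by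
  have ha := diag_pos n k a hA
  have h := matSk_rank_one n (Matrix.diagonal a) (Pi.single i 1) (-(a i)) k
  have e : Matrix.diagonal a + (-(a i)) • Matrix.vecMulVec (Pi.single i 1) (Pi.single i 1) =
      Matrix.diagonal (Function.update a i 0) := by
    ext r t
    by_cases hr : r = i
    · subst hr
      by_cases ht : r = t
      · subst ht; simp [Matrix.vecMulVec_apply]
      · simp [Matrix.vecMulVec_apply, ht, Pi.single_apply, Ne.symm ht]
    · simp [Matrix.vecMulVec_apply, Matrix.diagonal_apply, Function.update_apply, hr]
  rw [e, hA.2.2, matSk_diagonal n k hk] at h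
  have hup : ∀ l, 0 ≤ Function.update a i 0 l := by
    intro l
    rw [Function.update_apply]; split_ifs
    · exact le_rfl
    · exact (ha l).le
  have hnn : ∀ t ∈ Finset.powersetCard k (Finset.univ : Finset (Fin n)),
      0 ≤ ∏ l ∈ t, Function.update a i 0 l := fun t _ => Finset.prod_nonneg fun l _ => hup l
  constructor
  · have := Finset.sum_nonneg hnn
    linarith
  · intro hkn
    have : 0 < ∑ t ∈ Finset.powersetCard k (Finset.univ : Finset (Fin n)),
      ∏ l ∈ t, Function.update a i 0 l := by
      obtain ⟨t, ht, hc⟩ := Finset.exists_subset_card_eq (s := Finset.univ.erase i) (n := k)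
        (by simp; omega)
      refine Finset.sum_pos' hnn ⟨t, ?_, ?_⟩
      · simp [Finset.mem_powersetCard, hc]
      · refine Finset.prod_pos fun l hl => ?_
        have hne : l ≠ i := Finset.ne_of_mem_erase (ht hl)
        rw [Function.update_of_ne hne]; exact ha l
    linarith

lemma exists_h (n k : ℕ) (hn : 3 ≤ n) (hk1 : 1 ≤ k) (hk : k ≤ n) (a : Fin n → ℝ)
    (hA : MemA n k (Matrix.diagonal a)) (hk1' : k = 1 → (⨆ i, a i) < 1 / 2) :
    ∃ h : ℝ, 0 < h ∧ 2 * h < k ∧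
      ∀ i, a i * rkB n (Matrix.diagonal a) (Pi.single i 1) k ≤ h := by
  have hlt : ∀ i, a i * rkB n (Matrix.diagonal a) (Pi.single i 1) k < k / 2 := by
    intro i
    obtain ⟨h1, h2⟩ := aT_le n k hk1 hk a hA i
    rcases (show k = 1 ∨ k = 2 ∨ 3 ≤ k by omega) with rfl | rfl | h3
    · rw [rkB_one n (by omega)]
      have : (∑ l, (Pi.single i 1 : Fin n → ℝ) l ^ 2) = 1 := by
        rw [Finset.sum_eq_single i]
        · simp
        · intro b _ hb; simp [Pi.single_apply, hb]
        · simp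
      rw [this]
      have := le_ciSup (Set.finite_range a).bddAbove i
      have := hk1' rfl
      simp; linarith
    · have := h2 (by omega)
      simpa using this
    · have : (3 : ℝ) ≤ k := by exact_mod_cast h3
      linarith
  have : Nonempty (Fin n) := ⟨⟨0, by omega⟩⟩
  obtain ⟨i, hi⟩ := Finite.exists_max fun i => a i * rkB n (Matrix.diagonal a) (Pi.single i 1) k
  have hkpos : (0 : ℝ) < k := by exact_mod_cast hk1
  refine ⟨max (a i * rkB n (Matrix.diagonal a) (Pi.single i 1) k) (k / 4), by positivity, ?_, ?_⟩
  · have := hlt i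
    have : max (a i * rkB n (Matrix.diagonal a) (Pi.single i 1) k) ((k:ℝ) / 4) < k / 2 :=
      max_lt this (by linarith)
    linarith
  · intro l; exact (hi l).trans (le_max_left _ _)

lemma sub_w1 (n k : ℕ) (hk1 : 1 ≤ k) (hk : k ≤ n) (a : Fin n → ℝ)
    (hA : MemA n k (Matrix.diagonal a)) (h : ℝ)
    (hT : ∀ i, a i * rkB n (Matrix.diagonal a) (Pi.single i 1) k ≤ h)
    (p : Fin n → ℝ) (q g g' : ℝ) (hq : ∑ i, a i * p i ^ 2 = 2 * q) (hg : 0 < g) (hg' : g' ≤ 0)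
    (hS : 1 ≤ g ^ k * (1 + g' / g * (2 * h * q))) :
    (g • Matrix.diagonal a + g' • Matrix.vecMulVec (fun i => a i * p i) (fun i => a i * p i)).IsHermitian ∧
    InG n k (g • Matrix.diagonal a + g' • Matrix.vecMulVec (fun i => a i * p i) (fun i => a i * p i)) ∧
    1 ≤ matSk n k (g • Matrix.diagonal a + g' • Matrix.vecMulVec (fun i => a i * p i) (fun i => a i * p i)) := by
  have ha := diag_pos n k a hA
  have hH := hA.2.1.isHermitian
  set b : Fin n → ℝ := fun i => a i * p i with hb
  have e : g • Matrix.diagonal a + g' • Matrix.vecMulVec b b =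
      g • (Matrix.diagonal a + (g' / g) • Matrix.vecMulVec b b) := by
    rw [smul_add, smul_smul, mul_div_cancel₀ _ hg.ne']
  have hσ : g' / g ≤ 0 := div_nonpos_of_nonpos_of_nonneg hg' hg.le
  have hB : rkB n (Matrix.diagonal a) b k ≤ 2 * h * q := by
    rw [rkB_diagonal]
    calc _ = ∑ i, (a i * p i ^ 2) * (a i * rkB n (Matrix.diagonal a) (Pi.single i 1) k) :=
          Finset.sum_congr rfl fun i _ => by simp only [hb]; ring
      _ ≤ ∑ i, (a i * p i ^ 2) * h := Finset.sum_le_sum fun i _ =>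
          mul_le_mul_of_nonneg_left (hT i) (mul_nonneg (ha i).le (sq_nonneg _))
      _ = _ := by rw [← Finset.sum_mul, hq]; ring
  have hval : 1 ≤ matSk n k (g • (Matrix.diagonal a + (g' / g) • Matrix.vecMulVec b b)) := by
    rw [matSk_smul n k hk g hg.ne', matSk_rank_one, hA.2.2]
    refine hS.trans (mul_le_mul_of_nonneg_left ?_ (by positivity))
    have := mul_le_mul_of_nonpos_left hB hσ
    linarith
  have hpos : 0 < matSk n k (Matrix.diagonal a + (g' / g) • Matrix.vecMulVec b b) := by
    rw [matSk_smul n k hk g hg.ne'] at hval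
    exact (pos_iff_pos_of_mul_pos (lt_of_lt_of_le one_pos hval)).1 (by positivity)
  have hin := rank_one_down n k hk hk1 _ hH (inG_diag n k hk a ha) b (g' / g) hσ hpos
  refine ⟨?_, ?_, e ▸ hval⟩
  · rw [e]
    have := herm_rank_one n _ hH b (g' / g)
    rw [Matrix.IsHermitian, Matrix.conjTranspose_smul, this.eq]; simp
  · rw [e]
    intro j h1 h2
    rw [matSk_smul n j (h2.trans hk) g hg.ne']
    exact mul_pos (by positivity) (hin j h1 h2)

/-- second directional derivative -/
def SecD (n : ℕ) (w : Euc n → ℝ) (p v : Euc n) (l : ℝ) : Prop :=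
  ∃ g : ℝ → ℝ, (∀ᶠ t in 𝓝 (0 : ℝ), HasDerivAt (fun t : ℝ => w (p + t • v)) (g t) t) ∧
    HasDerivAt g l 0

lemma SecD.sub {n : ℕ} {w z : Euc n → ℝ} {p v : Euc n} {l m : ℝ} (h1 : SecD n w p v l)
    (h2 : SecD n z p v m) : SecD n (fun x => w x - z x) p v (l - m) := by
  obtain ⟨g1, a1, b1⟩ := h1
  obtain ⟨g2, a2, b2⟩ := h2
  refine ⟨fun t => g1 t - g2 t, ?_, b1.fun_sub b2⟩
  filter_upwards [a1, a2] with t h1 h2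
  exact h1.fun_sub h2

lemma norm_line {n : ℕ} (p v : Euc n) (t : ℝ) :
    ‖p + t • v‖ ^ 2 = ‖p‖ ^ 2 + 2 * inner ℝ p v * t + ‖v‖ ^ 2 * t ^ 2 := by
  rw [norm_add_sq_real, norm_smul, inner_smul_right, mul_pow, Real.norm_eq_abs, sq_abs]; ring

lemma secD_quad {n : ℕ} {w : Euc n → ℝ} {p v : Euc n} {A B C : ℝ}
    (h : ∀ t : ℝ, w (p + t • v) = A + B * t + C * t ^ 2) : SecD n w p v (2 * C) := by
  refine ⟨fun t => B + 2 * C * t, Eventually.of_forall fun t => ?_, ?_⟩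
  · have : (fun t : ℝ => w (p + t • v)) = fun t => A + B * t + C * t ^ 2 := funext h
    rw [this]
    have h1 := (((hasDerivAt_id' t).const_mul B).const_add A).fun_add ((hasDerivAt_pow 2 t).const_mul C)
    refine h1.congr_deriv ?_
    push_cast; ring
  · have h1 := (((hasDerivAt_id (0:ℝ)).const_mul (2 * C)).const_add B)
    simpa using h1

lemma SecD.nonneg {n : ℕ} {w : Euc n → ℝ} {p v : Euc n} {l : ℝ} (h : SecD n w p v l)
    (hm : IsLocalMin w p) : 0 ≤ l := by
  obtain ⟨g, hg, hl⟩ := h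
  by_contra hneg
  push Not at hneg
  set φ : ℝ → ℝ := fun t => w (p + t • v)
  have hφm : ∀ᶠ t in 𝓝 (0:ℝ), φ 0 ≤ φ t := by
    have hc : Tendsto (fun t : ℝ => p + t • v) (𝓝 0) (𝓝 p) := by
      have : Continuous (fun t : ℝ => p + t • v) := by fun_prop
      simpa using this.tendsto 0
    have := hc.eventually hm
    filter_upwards [this] with t ht
    simpa [φ] using ht
  have hlm : IsLocalMin φ 0 := hφm
  have hg0 : g 0 = 0 := hlm.hasDerivAt_eq_zero hg.self_of_nhds
  set ψ : ℝ → ℝ := fun t => φ t - (l / 4) * t ^ 2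
  have hψ : ∀ᶠ t in 𝓝 (0:ℝ), HasDerivAt ψ (g t - l / 2 * t) t := by
    filter_upwards [hg] with t ht
    have h1 := ht.fun_sub ((hasDerivAt_pow 2 t).const_mul (l / 4))
    refine h1.congr_deriv ?_
    push_cast; ring
  have hd : deriv ψ =ᶠ[𝓝 0] fun t => g t - l / 2 * t := hψ.mono fun t ht => ht.deriv
  have hd2 : deriv (deriv ψ) 0 = l / 2 := by
    rw [hd.deriv_eq]
    have h1 := hl.fun_sub ((hasDerivAt_id (0:ℝ)).const_mul (l / 2))
    have h2 := h1.deriv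
    simp only [id] at h2
    rw [h2]; ring
  have hd0 : deriv ψ 0 = 0 := by rw [hd.self_of_nhds]; simp [hg0]
  have hmax := isLocalMax_of_deriv_deriv_neg (f := ψ) (x₀ := 0) (by rw [hd2]; linarith) hd0
    hψ.self_of_nhds.continuousAt
  have hev : ∀ᶠ t in 𝓝 (0:ℝ), t = 0 := by
    filter_upwards [hmax, hφm] with t h1 h2
    have h3 : φ t - (l / 4) * t ^ 2 ≤ φ 0 := by simpa [ψ] using h1
    by_contra hne
    have : 0 < t ^ 2 := by positivity
    nlinarith
  obtain ⟨r, hr, hr2⟩ := Metric.eventually_nhds_iff.1 hev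
  have := hr2 (y := r / 2) (by rw [Real.dist_eq, sub_zero, abs_of_pos (by linarith)]; linarith)
  linarith

open Matrix in
lemma secD_hess {n : ℕ} {u : Euc n → ℝ} {p : Euc n} (hu : ContDiffAt ℝ 2 u p) (v : Euc n) :
    SecD n u p v (v.ofLp ⬝ᵥ (hessMat n u p *ᵥ v.ofLp)) := by
  have hline : ∀ t : ℝ, HasDerivAt (fun t : ℝ => p + t • v) v t := by
    intro t
    simpa using ((hasDerivAt_id t).smul_const v).const_add p
  have hc : Tendsto (fun t : ℝ => p + t • v) (𝓝 0) (𝓝 p) := by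
    simpa using (hline 0).continuousAt.tendsto
  refine ⟨fun t => fderiv ℝ u (p + t • v) v, ?_, ?_⟩
  · have h1 : ∀ᶠ y in 𝓝 p, ContDiffAt ℝ 2 u y := hu.eventually (by simp)
    filter_upwards [hc.eventually h1] with t ht
    exact (ht.differentiableAt (by simp)).hasFDerivAt.comp_hasDerivAt t (hline t)
  · have h2 : DifferentiableAt ℝ (fderiv ℝ u) p :=
      (hu.fderiv_right (m := 1) (by norm_num)).differentiableAt (by simp)
    have h3 : HasFDerivAt (fderiv ℝ u) (fderiv ℝ (fderiv ℝ u) p) (p + (0:ℝ) • v) := by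
      simpa using h2.hasFDerivAt
    have h4 := h3.comp_hasDerivAt (0:ℝ) (hline 0)
    have h5 : HasDerivAt (fun t : ℝ => fderiv ℝ u (p + t • v) v) (fderiv ℝ (fderiv ℝ u) p v v) 0 := by
      have := (ContinuousLinearMap.apply ℝ ℝ v).hasFDerivAt.comp_hasDerivAt (0:ℝ) h4
      refine HasDerivAt.congr_deriv (f := fun t : ℝ => fderiv ℝ u (p + t • v) v) this ?_
      simp
    convert h5 using 1
    have hv : v = ∑ i, v i • ebasis n i := by
      ext j
      simp [ebasis, Pi.single_apply]
    have e : ∀ i j, hessMat n u p i j = fderiv ℝ (fderiv ℝ u) p (ebasis n i) (ebasis n j) := by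
      intro i j
      simp [hessMat, iteratedFDeriv_two_apply]
    conv_rhs => rw [hv]
    simp only [map_sum, map_smul, _root_.sum_apply, _root_.smul_apply,
      dotProduct, mulVec, e, smul_eq_mul, Finset.mul_sum]
    rw [Finset.sum_comm]
    refine Finset.sum_congr rfl fun i _ => Finset.sum_congr rfl fun j _ => ?_
    ring

lemma hess_herm {n : ℕ} {u : Euc n → ℝ} {p : Euc n} (hu : ContDiffAt ℝ 2 u p) :
    (hessMat n u p).IsHermitian := by
  have := hu.isSymmSndFDerivAt (by simp)
  ext i j
  simp [hessMat, iteratedFDeriv_two_apply]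
  exact this.eq _ _

open Matrix in
/-- infinitesimal subsolution -/
def SubAt (n k : ℕ) (w : Euc n → ℝ) (p : Euc n) : Prop :=
  ∃ N : Matrix (Fin n) (Fin n) ℝ, N.IsHermitian ∧ InG n k N ∧ 1 ≤ matSk n k N ∧
    ∀ v : Euc n, SecD n w p v (v.ofLp ⬝ᵥ (N *ᵥ v.ofLp))

open Matrix in
lemma comparison (n k : ℕ) (hk1 : 1 ≤ k) (hkn : k ≤ n) (K O : Set (Euc n)) (hK : IsCompact K)
    (hO : IsOpen O) (hOK : O ⊆ K) (u w : Euc n → ℝ) (huc : ContinuousOn u K)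
    (hwc : ContinuousOn w K) (hu : ∀ p ∈ O, ContDiffAt ℝ 2 u p ∧ SkHess n k u p = 1)
    (hw : ∀ p ∈ O, SubAt n k w p) (m : ℝ) (hb : ∀ x ∈ K \ O, w x + m ≤ u x) :
    ∀ x ∈ K, w x + m ≤ u x := by
  intro x₁ hx₁
  by_contra hlt
  push Not at hlt
  obtain ⟨R, hR⟩ := hK.isBounded.exists_norm_le
  set γ := w x₁ + m - u x₁ with hγ
  have hγ0 : 0 < γ := by linarith
  set δ := γ / (2 * (R ^ 2 + 1)) with hδ
  have hδ0 : 0 < δ := by positivity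
  have hδR : δ * R ^ 2 < γ := by
    rw [hδ, div_mul_eq_mul_div, div_lt_iff₀ (by positivity)]; nlinarith [sq_nonneg R]
  obtain ⟨p, hpK, hp⟩ := hK.exists_isMinOn ⟨x₁, hx₁⟩
    (f := fun x => u x - w x - δ * ‖x‖ ^ 2) (by fun_prop)
  have hp1 : u p - w p - δ * ‖p‖ ^ 2 ≤ u x₁ - w x₁ - δ * ‖x₁‖ ^ 2 := hp hx₁
  have hpO : p ∈ O := by
    by_contra hno
    have h1 := hb p ⟨hpK, hno⟩
    have h2 : ‖p‖ ^ 2 ≤ R ^ 2 := pow_le_pow_left₀ (norm_nonneg _) (hR p hpK) 2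
    have h3 := mul_le_mul_of_nonneg_left h2 hδ0.le
    have h4 : 0 ≤ δ * ‖x₁‖ ^ 2 := by positivity
    linarith
  have hmin : IsLocalMin (fun x => u x - w x - δ * ‖x‖ ^ 2) p :=
    hp.isLocalMin (mem_of_superset (hO.mem_nhds hpO) hOK)
  obtain ⟨hu2, huS⟩ := hu p hpO
  obtain ⟨N, hNH, hNG, hN1, hNs⟩ := hw p hpO
  have hMH := hess_herm hu2
  have hP : (hessMat n u p - N).PosDef := by
    refine Matrix.PosDef.of_dotProduct_mulVec_pos (hMH.sub hNH) ?_
    intro v hv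
    set V : Euc n := WithLp.toLp 2 v
    have hVv : V.ofLp = v := rfl
    have hV : V ≠ 0 := by
      intro h0; apply hv; rw [← hVv, h0]; rfl
    have hs : SecD n (fun x => δ * ‖x‖ ^ 2) p V (2 * (δ * ‖V‖ ^ 2)) :=
      secD_quad (A := δ * ‖p‖ ^ 2) (B := δ * (2 * inner ℝ p V)) (by
        intro t; rw [norm_line]; ring)
    have h1 := (((secD_hess hu2 V).sub (hNs V)).sub hs).nonneg hmin
    rw [hVv] at h1
    have h2 : 0 < ‖V‖ := norm_pos_iff.2 hV
    have h3 : 0 < δ * ‖V‖ ^ 2 := by positivity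
    rw [Matrix.sub_mulVec, dotProduct_sub]
    simp only [star_trivial]
    linarith
  have := posDef_up n k hkn hk1 N _ hNH hNG hP
  rw [add_sub_cancel] at this
  unfold SkHess at huS
  linarith

lemma quadA_diag (n : ℕ) (a : Fin n → ℝ) (x : Euc n) :
    quadA n (Matrix.diagonal a) x = 1 / 2 * ∑ i, a i * x i ^ 2 := by
  unfold quadA
  congr 1
  refine Finset.sum_congr rfl fun i _ => ?_
  rw [Finset.sum_eq_single i]
  · simp; ring
  · intro j _ hj; simp [Matrix.diagonal_apply, Ne.symm hj]
  · simp

lemma quadA_line (n : ℕ) (a : Fin n → ℝ) (p v : Euc n) (t : ℝ) :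
    quadA n (Matrix.diagonal a) (p + t • v) = quadA n (Matrix.diagonal a) p +
      (∑ i, a i * p i * v i) * t + (1 / 2 * ∑ i, a i * v i ^ 2) * t ^ 2 := by
  rw [quadA_diag, quadA_diag, Finset.sum_mul, mul_assoc, Finset.sum_mul]
  simp only [Finset.mul_sum, ← Finset.sum_add_distrib]
  refine Finset.sum_congr rfl fun i _ => ?_
  simp; ring

lemma quadA_cont (n : ℕ) (a : Fin n → ℝ) : Continuous (quadA n (Matrix.diagonal a)) := by
  unfold quadA; fun_prop

open Matrix in
lemma secD_comp (n : ℕ) (a : Fin n → ℝ) (p v : Euc n) (f g : ℝ → ℝ) (g' : ℝ)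
    (hf : ∀ᶠ s in 𝓝 (quadA n (Matrix.diagonal a) p), HasDerivAt f (g s) s)
    (hg : HasDerivAt g g' (quadA n (Matrix.diagonal a) p)) :
    SecD n (fun x => f (quadA n (Matrix.diagonal a) x)) p v
      (v.ofLp ⬝ᵥ ((g (quadA n (Matrix.diagonal a) p) • Matrix.diagonal a + g' • Matrix.vecMulVec (fun i => a i * p i) (fun i => a i * p i)) *ᵥ v.ofLp)) := by
  set B := ∑ i, a i * p i * v i with hB
  set C := 1 / 2 * ∑ i, a i * v i ^ 2 with hC
  set q := quadA n (Matrix.diagonal a) p with hq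
  have hQd : ∀ t : ℝ, HasDerivAt (fun t : ℝ => q + B * t + C * t ^ 2) (B + 2 * C * t) t := by
    intro t
    have h1 := (((hasDerivAt_id' t).const_mul B).const_add q).fun_add ((hasDerivAt_pow 2 t).const_mul C)
    refine h1.congr_deriv ?_
    push_cast; ring
  have e : ∀ t : ℝ, f (quadA n (Matrix.diagonal a) (p + t • v)) = f (q + B * t + C * t ^ 2) := by
    intro t; rw [quadA_line]
  have hc : Tendsto (fun t : ℝ => q + B * t + C * t ^ 2) (𝓝 0) (𝓝 q) := by
    simpa using (hQd 0).continuousAt.tendsto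
  refine ⟨fun t => g (q + B * t + C * t ^ 2) * (B + 2 * C * t), ?_, ?_⟩
  · simp only [e]
    filter_upwards [hc.eventually hf] with t ht
    exact ht.comp t (hQd t)
  · have hg2 : HasDerivAt g g' (q + B * 0 + C * 0 ^ 2) := by simpa using hg
    have h1 : HasDerivAt (fun t : ℝ => g (q + B * t + C * t ^ 2)) _ 0 := hg2.comp (0:ℝ) (hQd 0)
    have h2 := h1.fun_mul (((hasDerivAt_id' (0:ℝ)).const_mul (2 * C)).const_add B)
    refine h2.congr_deriv ?_
    have e1 : v.ofLp ⬝ᵥ (Matrix.diagonal a *ᵥ v.ofLp) = 2 * C := by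
      rw [hC, dotProduct, Finset.mul_sum, Finset.mul_sum]
      refine Finset.sum_congr rfl fun i _ => ?_
      rw [mulVec_diagonal]; ring
    have e2 : v.ofLp ⬝ᵥ (Matrix.vecMulVec (fun i => a i * p i) (fun i => a i * p i) *ᵥ v.ofLp) = B ^ 2 := by
      rw [sq, hB, Finset.sum_mul_sum]
      simp only [dotProduct, mulVec, vecMulVec_apply, Finset.mul_sum]
      refine Finset.sum_congr rfl fun i _ => Finset.sum_congr rfl fun j _ => ?_
      ring
    rw [add_mulVec, smul_mulVec, smul_mulVec, dotProduct_add, dotProduct_smul, dotProduct_smul, e1, e2]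
    simp only [smul_eq_mul]
    simp
    ring

lemma barrier (n k : ℕ) (hn : 3 ≤ n) (hk1 : 1 ≤ k) (hk : k ≤ n) (a : Fin n → ℝ)
    (hA : MemA n k (Matrix.diagonal a)) (hk1' : k = 1 → (⨆ i, a i) < 1 / 2) (B q₁ : ℝ)
    (hB : 0 ≤ B) (hq₁ : 0 < q₁) :
    ∃ (f : ℝ → ℝ) (C : ℝ), f q₁ = 0 ∧ ContinuousOn f (Set.Ici q₁) ∧
      (∀ p, q₁ < quadA n (Matrix.diagonal a) p →
        SubAt n k (fun x => f (quadA n (Matrix.diagonal a) x)) p) ∧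
      (∀ q, q₁ ≤ q → f q ≤ q + C) ∧ B ≤ f (q₁ + 1) := by
  obtain ⟨h, hh0, hhk, hT⟩ := exists_h n k hn hk1 hk a hA hk1'
  have hk0 : (0 : ℝ) < k := by exact_mod_cast hk1
  have hk1r : (1 : ℝ) ≤ k := by exact_mod_cast hk1
  set m : ℝ := k / (2 * h) with hm
  have hm1 : 1 < m := by rw [hm, lt_div_iff₀ (by linarith)]; linarith
  have hm2 : 2 * h * m = k := by rw [hm]; field_simp
  set α : ℝ := B ^ k * (q₁ + 1) ^ m with hα
  have hα0 : 0 ≤ α := by positivity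
  set g : ℝ → ℝ := fun t => (1 + α * t ^ (-m)) ^ ((1 : ℝ) / k) with hg
  have hG1 : ∀ t, 0 < t → 1 ≤ 1 + α * t ^ (-m) := by
    intro t ht
    have : 0 ≤ α * t ^ (-m) := by positivity
    linarith
  have hgd : ∀ t, 0 < t → HasDerivAt g ((α * (-m * t ^ (-m - 1))) * ((1 : ℝ) / k) *
      (1 + α * t ^ (-m)) ^ ((1 : ℝ) / k - 1)) t := by
    intro t ht
    have h1 := ((Real.hasDerivAt_rpow_const (x := t) (p := -m) (Or.inl ht.ne')).const_mul α).const_add 1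
    exact h1.rpow_const (Or.inl (by linarith [hG1 t ht]))
  have hgc : ContinuousOn g (Set.Ioi 0) := fun t ht => (hgd t ht).continuousAt.continuousWithinAt
  have hgInt : ∀ x y, 0 < x → 0 < y → IntervalIntegrable g volume x y := by
    intro x y hx hy
    apply ContinuousOn.intervalIntegrable
    apply hgc.mono
    intro t ht
    rw [Set.mem_uIcc] at ht
    rcases ht with ht | ht
    · exact lt_of_lt_of_le hx ht.1
    · exact lt_of_lt_of_le hy ht.1
  have hfd : ∀ q, 0 < q → HasDerivAt (fun q => ∫ t in q₁..q, g t) (g q) q := by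
    intro q hq
    exact intervalIntegral.integral_hasDerivAt_right (hgInt q₁ q hq₁ hq)
      (hgc.stronglyMeasurableAtFilter isOpen_Ioi q hq) (hgd q hq).continuousAt
  refine ⟨fun q => ∫ t in q₁..q, g t, α * q₁ ^ (1 - m) / (m - 1), by simp, ?_, ?_, ?_, ?_⟩
  · intro q hq
    exact (hfd q (lt_of_lt_of_le hq₁ hq)).continuousAt.continuousWithinAt
  · intro p hp
    set q := quadA n (Matrix.diagonal a) p with hqd
    have hq0 : 0 < q := hq₁.trans hp
    have hG := hG1 q hq0
    have hG0 : 0 < 1 + α * q ^ (-m) := by linarith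
    have hgq : g q = (1 + α * q ^ (-m)) ^ ((1 : ℝ) / k) := rfl
    have hgpos : 0 < g q := by rw [hgq]; positivity
    have hgk : g q ^ k = 1 + α * q ^ (-m) := by
      rw [hgq, one_div]; exact Real.rpow_inv_natCast_pow hG0.le (by omega)
    have hsub := sub_w1 n k hk1 hk a hA h hT p.ofLp q (g q) ((α * (-m * q ^ (-m - 1))) * ((1 : ℝ) / k) *
      (1 + α * q ^ (-m)) ^ ((1 : ℝ) / k - 1)) (by rw [hqd, quadA_diag]; ring) hgpos (by
        have : 0 ≤ α * (m * q ^ (-m - 1)) * ((1 : ℝ) / k) *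
          (1 + α * q ^ (-m)) ^ ((1 : ℝ) / k - 1) := by positivity
        linarith) (by
        have e1 : (1 + α * q ^ (-m)) ^ ((1 : ℝ) / k - 1) = g q / (1 + α * q ^ (-m)) := by
          rw [Real.rpow_sub hG0, Real.rpow_one]
        have e2 : q ^ (-m - 1) = q ^ (-m) / q := by
          rw [Real.rpow_sub hq0, Real.rpow_one]
        rw [hgk, e1, e2]
        have : (1 + α * q ^ (-m)) * (1 + α * (-m * (q ^ (-m) / q)) * (1 / ↑k) * (g q / (1 + α * q ^ (-m))) / g q * (2 * h * q)) = (1 + α * q ^ (-m)) - α * q ^ (-m) * ((2 * h * m) / k) := by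
          field_simp
          ring
        rw [this, hm2, div_self hk0.ne']
        linarith)
    refine ⟨_, hsub.1, hsub.2.1, hsub.2.2, fun v => ?_⟩
    refine secD_comp n a p v (fun q => ∫ t in q₁..q, g t) g _ ?_ (hgd q hq0)
    filter_upwards [lt_mem_nhds hq0] with s hs using hfd s hs
  · intro q hq
    have hq0 : 0 < q := lt_of_lt_of_le hq₁ hq
    have hni : (0:ℝ) ∉ Set.uIcc q₁ q := by
      rw [Set.uIcc_of_le hq]; intro h0; linarith [h0.1]
    have hi2 : IntervalIntegrable (fun t : ℝ => t ^ (-m)) volume q₁ q :=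
      intervalIntegral.intervalIntegrable_rpow (Or.inr hni)
    have h1 : (∫ t in q₁..q, g t) ≤ ∫ t in q₁..q, (1 + α * t ^ (-m)) := by
      apply intervalIntegral.integral_mono_on hq (hgInt _ _ hq₁ hq0)
      · exact (intervalIntegrable_const).add (hi2.const_mul α)
      · intro t ht
        have := hG1 t (lt_of_lt_of_le hq₁ ht.1)
        calc g t ≤ (1 + α * t ^ (-m)) ^ (1 : ℝ) :=
              Real.rpow_le_rpow_of_exponent_le this (by rw [div_le_one hk0]; exact hk1r)
          _ = _ := Real.rpow_one _
    rw [intervalIntegral.integral_add intervalIntegrable_const (hi2.const_mul α),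
      intervalIntegral.integral_const_mul, integral_rpow (Or.inr ⟨by linarith, hni⟩)] at h1
    have h2 : (q ^ (-m + 1) - q₁ ^ (-m + 1)) / (-m + 1) ≤ q₁ ^ (1 - m) / (m - 1) := by
      rw [show -m + 1 = 1 - m by ring]
      rw [← neg_div_neg_eq, show -(1 - m) = m - 1 by ring]
      apply div_le_div_of_nonneg_right _ (by linarith)
      have : 0 < q ^ (1 - m) := by positivity
      linarith
    have h3 := mul_le_mul_of_nonneg_left h2 hα0
    simp at h1
    rw [mul_div_assoc]
    linarith
  · have h1 : (∫ t in q₁..(q₁ + 1), B) ≤ ∫ t in q₁..(q₁ + 1), g t := by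
      apply intervalIntegral.integral_mono_on (by linarith) intervalIntegrable_const
        (hgInt _ _ hq₁ (by linarith))
      intro t ht
      have ht0 : 0 < t := lt_of_lt_of_le hq₁ ht.1
      have h2 : (q₁ + 1) ^ (-m) ≤ t ^ (-m) :=
        Real.rpow_le_rpow_of_nonpos ht0 ht.2 (by linarith)
      have h3 : B ^ k = α * (q₁ + 1) ^ (-m) := by
        rw [hα, mul_assoc, ← Real.rpow_add (by linarith)]; simp
      have h4 : B ^ k ≤ 1 + α * t ^ (-m) := by
        have := mul_le_mul_of_nonneg_left h2 hα0
        linarith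
      calc B = (B ^ k) ^ ((1 : ℝ) / k) := by
            rw [one_div]; exact (Real.pow_rpow_inv_natCast hB (by omega)).symm
        _ ≤ g t := Real.rpow_le_rpow (by positivity) h4 (by positivity)
    simpa using h1

theorem ext_far (n : ℕ) (g : Euc n → ℝ) (hg : Tendsto g (cocompact (Euc n)) (𝓝 0))
    (η : ℝ) (hη : 0 < η) : ∃ R₀ : ℝ, ∀ x : Euc n, R₀ ≤ ‖x‖ → |g x| < η := by
  have h := Metric.tendsto_nhds.1 hg η hη
  rw [← Metric.cobounded_eq_cocompact, (Metric.hasBasis_cobounded_compl_closedBall (0 : Euc n)).eventually_iff] at h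
  obtain ⟨R, -, hR⟩ := h
  refine ⟨R + 1, fun x hx => ?_⟩
  have := @hR x (by simp; linarith)
  simpa [Real.dist_eq] using this

theorem ext_smooth (n : ℕ) (u : Euc n → ℝ) (S : Set (Euc n)) (h : SmoothOnNhd n u S) :
    ∀ x ∈ S, ContDiffAt ℝ 2 u x := by
  obtain ⟨U, hU, hSU, hu⟩ := h
  intro x hx
  refine ((hu.contDiffAt (hU.mem_nhds (hSU hx)))).of_le ?_
  exact WithTop.coe_le_coe.2 (le_top : (2 : ℕ∞) ≤ ⊤)

theorem sub_hess (n k : ℕ) (hk1 : 1 ≤ k) (u : Euc n → ℝ) (p : Euc n) (hu : ContDiffAt ℝ 2 u p)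
    (hc : ∀ j : ℕ, 1 ≤ j → j ≤ k → 0 < matSk n j (hessMat n u p)) (hs : SkHess n k u p = 1) :
    SubAt n k u p :=
  ⟨hessMat n u p, hess_herm hu, hc, hs.ge, fun v => secD_hess hu v⟩

theorem sub_par (n k : ℕ) (hkn : k ≤ n) (x₀ p : Euc n) (ε : ℝ) :
    SubAt n k (fun x => 1 / 2 * (‖x - x₀‖ ^ 2 - ε ^ 2)) p := by
  refine ⟨1, Matrix.isHermitian_one, (matSk_id n k hkn).1, (matSk_id n k hkn).2, fun v => ?_⟩
  have h := secD_quad (w := fun x => 1 / 2 * (‖x - x₀‖ ^ 2 - ε ^ 2)) (p := p) (v := v)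
    (A := 1 / 2 * (‖p - x₀‖ ^ 2 - ε ^ 2)) (B := inner ℝ (p - x₀) v) (C := 1 / 2 * ‖v‖ ^ 2) (by
      intro t
      have e : p + t • v - x₀ = (p - x₀) + t • v := by abel
      simp only [e, norm_line]; ring)
  convert h using 1
  rw [EuclideanSpace.real_norm_sq_eq]
  simp [dotProduct, Matrix.one_mulVec, sq]

theorem quad_coer (n : ℕ) (hn : 0 < n) (a : Fin n → ℝ) (ha : ∀ i, 0 < a i) :
    ∃ d > 0, ∀ x, d * ‖x‖ ^ 2 ≤ quadA n (Matrix.diagonal a) x := by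
  have : Nonempty (Fin n) := ⟨⟨0, hn⟩⟩
  obtain ⟨i₀, h₀⟩ := Finite.exists_min a
  refine ⟨1 / 2 * a i₀, by have := ha i₀; positivity, fun x => ?_⟩
  rw [quadA_diag, EuclideanSpace.real_norm_sq_eq, mul_assoc, Finset.mul_sum]
  gcongr with i
  exact h₀ i

theorem quad_bd (n : ℕ) (a : Fin n → ℝ) (ha : ∀ i, 0 < a i) :
    ∀ x : Euc n, ‖x‖ ≤ 1 → quadA n (Matrix.diagonal a) x < 1 + ∑ i, a i := by
  intro x hx
  have h : ∑ i, a i * x i ^ 2 ≤ ∑ i, a i := by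
    refine Finset.sum_le_sum fun i _ => ?_
    have h1 : |x i| ≤ 1 := by
      have := PiLp.norm_apply_le x i
      rw [Real.norm_eq_abs] at this
      linarith
    have h2 : x i ^ 2 ≤ 1 := (sq_le_one_iff_abs_le_one _).2 h1
    have := ha i
    nlinarith
  have h3 : 0 ≤ ∑ i, a i * x i ^ 2 := Finset.sum_nonneg fun i _ => by
    have := ha i; positivity
  rw [quadA_diag]; linarith

/-- Step 1: outer barrier. -/
theorem outer_step (n k : ℕ) (hk1 : 1 ≤ k) (hkn : k ≤ n) (a : Fin n → ℝ)
    (u : Euc n → ℝ) (c q₁ μ C : ℝ) (f : ℝ → ℝ)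
    (hu : ∀ p, q₁ ≤ quadA n (Matrix.diagonal a) p → ContDiffAt ℝ 2 u p)
    (hs : ∀ p, q₁ ≤ quadA n (Matrix.diagonal a) p → SkHess n k u p = 1)
    (hlim : Tendsto (fun x : Euc n => u x - (quadA n (Matrix.diagonal a) x + c))
      (cocompact (Euc n)) (𝓝 0))
    (hf0 : f q₁ = 0) (hfc : ContinuousOn f (Set.Ici q₁))
    (hfs : ∀ p, q₁ < quadA n (Matrix.diagonal a) p →
      SubAt n k (fun x => f (quadA n (Matrix.diagonal a) x)) p)
    (hfC : ∀ q ≥ q₁, f q ≤ q + C) (hC : C ≤ c) (hμ : μ ≤ 0)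
    (hb : ∀ x, quadA n (Matrix.diagonal a) x = q₁ → μ ≤ u x) :
    ∀ x, q₁ ≤ quadA n (Matrix.diagonal a) x → f (quadA n (Matrix.diagonal a) x) + μ ≤ u x := by
  intro x hx
  refine le_of_forall_pos_le_add fun η hη => ?_
  obtain ⟨R₀, hR₀⟩ := ext_far n _ hlim η hη
  have hQ := quadA_cont n a
  set Q := quadA n (Matrix.diagonal a) with hQd
  set R := max R₀ ‖x‖ with hR
  have := comparison n k hk1 hkn ({y | q₁ ≤ Q y} ∩ Metric.closedBall 0 R)
    ({y | q₁ < Q y} ∩ Metric.ball 0 R)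
    ((isCompact_closedBall _ _).inter_left (isClosed_le continuous_const hQ))
    ((isOpen_lt continuous_const hQ).inter Metric.isOpen_ball)
    (fun y hy => ⟨le_of_lt (show q₁ < Q y from hy.1), Metric.ball_subset_closedBall hy.2⟩) u (fun x => f (Q x))
    (fun y hy => (hu y hy.1).continuousAt.continuousWithinAt)
    (hfc.comp hQ.continuousOn fun y hy => hy.1)
    (fun p hp => ⟨hu p (le_of_lt hp.1), hs p (le_of_lt hp.1)⟩)
    (fun p hp => hfs p hp.1) (μ - η) (by
      rintro y ⟨⟨h1, h2⟩, h3⟩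
      rcases eq_or_lt_of_le (show q₁ ≤ Q y from h1) with h | h
      · have := hb y h.symm
        rw [← h, hf0]; linarith
      · have hn : R ≤ ‖y‖ := by
          by_contra hlt
          push Not at hlt
          exact h3 ⟨h, by simpa using hlt⟩
        have h4 := (abs_lt.1 (hR₀ y (le_trans (le_max_left _ _) hn))).1
        have h5 := hfC (Q y) h1
        linarith) x ⟨hx, by simp [hR]⟩
  linarith

/-- Step 2: nonnegativity near the hole. -/
theorem nonneg_step (n k : ℕ) (hk1 : 1 ≤ k) (hkn : k ≤ n) (a : Fin n → ℝ) (x₀ : Euc n)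
    (u : Euc n → ℝ) (ε c q₁ C B : ℝ) (f : ℝ → ℝ) (hε : 0 < ε)
    (hcomp : ∀ q, IsCompact {x | quadA n (Matrix.diagonal a) x ≤ q})
    (hball : ∀ x ∈ Metric.closedBall x₀ ε, quadA n (Matrix.diagonal a) x < q₁)
    (hB : ∀ x, quadA n (Matrix.diagonal a) x ≤ q₁ + 1 → 1 / 2 * ‖x - x₀‖ ^ 2 ≤ B)
    (hsol : ExtBallSol n k a x₀ ε c u)
    (hf0 : f q₁ = 0) (hfc : ContinuousOn f (Set.Ici q₁))
    (hfs : ∀ p, q₁ < quadA n (Matrix.diagonal a) p →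
      SubAt n k (fun x => f (quadA n (Matrix.diagonal a) x)) p)
    (hfC : ∀ q ≥ q₁, f q ≤ q + C) (hfB : B ≤ f (q₁ + 1)) (hC : C ≤ c) :
    ∀ x, x ∉ Metric.ball x₀ ε → quadA n (Matrix.diagonal a) x ≤ q₁ → 0 ≤ u x := by
  intro x hx hxq
  obtain ⟨hsm, hkc, hsk, hsp, hlim⟩ := hsol
  rw [closure_ball _ hε.ne'] at hkc hsk
  have hu := ext_smooth n u _ hsm
  have hQ := quadA_cont n a
  set Q := quadA n (Matrix.diagonal a) with hQd
  obtain ⟨p, ⟨hpq, hpb⟩, hpm⟩ := ((hcomp q₁).diff Metric.isOpen_ball).exists_isMinOn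
    ⟨x, hxq, hx⟩ (f := u) (fun y hy => (hu y hy.2).continuousAt.continuousWithinAt)
  have hmin : ∀ y, Q y ≤ q₁ → y ∉ Metric.ball x₀ ε → u p ≤ u y := fun y h1 h2 => hpm ⟨h1, h2⟩
  refine le_trans ?_ (hmin x hxq hx)
  by_contra hneg
  push Not at hneg
  have hout : ∀ y, q₁ ≤ Q y → y ∉ Metric.closedBall x₀ ε := fun y hy h =>
    absurd (hball y h) (not_lt.2 hy)
  have hout' : ∀ y, q₁ ≤ Q y → y ∉ Metric.ball x₀ ε := fun y hy h =>
    hout y hy (Metric.ball_subset_closedBall h)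
  have h1 := outer_step n k hk1 hkn a u c q₁ (u p) C f (fun y hy => hu y (hout' y hy))
    (fun y hy => hsk y (hout y hy)) hlim hf0 hfc hfs hfC hC hneg.le
    (fun y hy => hmin y hy.le (hout' y hy.ge))
  have h2 := comparison n k hk1 hkn ({y | Q y ≤ q₁ + 1} \ Metric.ball x₀ ε)
    ({y | Q y < q₁ + 1} \ Metric.closedBall x₀ ε)
    ((hcomp _).diff Metric.isOpen_ball)
    ((isOpen_lt hQ continuous_const).sdiff Metric.isClosed_closedBall)
    (fun y hy => ⟨le_of_lt (show Q y < q₁ + 1 from hy.1), fun h => hy.2 (Metric.ball_subset_closedBall h)⟩) u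
    (fun x => 1 / 2 * (‖x - x₀‖ ^ 2 - ε ^ 2))
    (fun y hy => (hu y hy.2).continuousAt.continuousWithinAt)
    (by fun_prop)
    (fun y hy => ⟨hu y fun h => hy.2 (Metric.ball_subset_closedBall h), hsk y hy.2⟩)
    (fun y hy => sub_par n k hkn x₀ y ε) (u p) (by
      rintro y ⟨⟨g1, g2⟩, g3⟩
      rcases eq_or_lt_of_le (show Q y ≤ q₁ + 1 from g1) with h | h
      · have e1 := h1 y (by rw [← hQd, h]; linarith)
        rw [← hQd, h] at e1
        have e2 := hB y h.le
        have e3 := sq_nonneg ε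
        linarith
      · have hs : y ∈ Metric.sphere x₀ ε := by
          by_contra hns
          refine g3 ⟨h, fun hc => ?_⟩
          rw [← Metric.ball_union_sphere] at hc
          exact hc.elim g2 hns
        rw [hsp y hs, ← dist_eq_norm, Metric.mem_sphere.1 hs]
        linarith) p ⟨by have : Q p ≤ q₁ := hpq; show Q p ≤ q₁ + 1; linarith, hpb⟩
  have hns : ε ≠ dist p x₀ := fun h => by
    have := hsp p (Metric.mem_sphere.2 h.symm); linarith
  have hge : ε ≤ dist p x₀ := by simpa using hpb
  have hlt := lt_of_le_of_ne hge hns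
  rw [← dist_eq_norm] at h2
  have : ε ^ 2 < dist p x₀ ^ 2 := by gcongr
  linarith

/-- Step 3: comparison of the two solutions outside the larger ball. -/
theorem compare_step (n k : ℕ) (hk1 : 1 ≤ k) (hkn : k ≤ n) (a : Fin n → ℝ) (x₀ : Euc n)
    (u₁ u₂ : Euc n → ℝ) (ε₁ ε₂ c : ℝ) (h0 : 0 < ε₁) (h12 : ε₁ < ε₂)
    (hs₁ : ExtBallSol n k a x₀ ε₁ c u₁) (hs₂ : ExtBallSol n k a x₀ ε₂ c u₂)
    (hpos : ∀ x ∈ Metric.sphere x₀ ε₂, 0 ≤ u₁ x) :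
    ∀ x, x ∉ Metric.ball x₀ ε₂ → u₂ x ≤ u₁ x := by
  intro x hx
  obtain ⟨hsm₁, hkc₁, hsk₁, hsp₁, hlim₁⟩ := hs₁
  obtain ⟨hsm₂, hkc₂, hsk₂, hsp₂, hlim₂⟩ := hs₂
  rw [closure_ball _ h0.ne'] at hkc₁ hsk₁
  rw [closure_ball _ (h0.trans h12).ne'] at hkc₂ hsk₂
  have hu₁ := ext_smooth n u₁ _ hsm₁
  have hu₂ := ext_smooth n u₂ _ hsm₂
  have hb1 : ∀ y, y ∉ Metric.ball x₀ ε₂ → y ∉ Metric.closedBall x₀ ε₁ := fun y hy h =>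
    hy (Metric.closedBall_subset_ball h12 h)
  have hb2 : ∀ y, y ∉ Metric.closedBall x₀ ε₂ → y ∉ Metric.ball x₀ ε₂ := fun y hy h =>
    hy (Metric.ball_subset_closedBall h)
  have hb3 : ∀ y, y ∉ Metric.ball x₀ ε₂ → y ∉ Metric.ball x₀ ε₁ := fun y hy h =>
    hy (Metric.ball_subset_ball h12.le h)
  refine le_of_forall_pos_le_add fun η hη => ?_
  obtain ⟨R₁, hR₁⟩ := ext_far n _ hlim₁ (η / 2) (by positivity)
  obtain ⟨R₂, hR₂⟩ := ext_far n _ hlim₂ (η / 2) (by positivity)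
  set R := max (max R₁ R₂) ‖x‖ with hR
  have := comparison n k hk1 hkn (Metric.closedBall 0 R \ Metric.ball x₀ ε₂)
    (Metric.ball 0 R \ Metric.closedBall x₀ ε₂)
    ((isCompact_closedBall _ _).diff Metric.isOpen_ball)
    (Metric.isOpen_ball.sdiff Metric.isClosed_closedBall)
    (fun y hy => ⟨Metric.ball_subset_closedBall hy.1, hb2 y hy.2⟩) u₁ u₂
    (fun y hy => (hu₁ y (hb3 y hy.2)).continuousAt.continuousWithinAt)
    (fun y hy => (hu₂ y hy.2).continuousAt.continuousWithinAt)
    (fun y hy => ⟨hu₁ y (hb3 y (hb2 y hy.2)), hsk₁ y (hb1 y (hb2 y hy.2))⟩)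
    (fun y hy => sub_hess n k hk1 u₂ y (hu₂ y (hb2 y hy.2)) (hkc₂ y hy.2) (hsk₂ y hy.2))
    (-η) (by
      rintro y ⟨⟨g1, g2⟩, g3⟩
      by_cases hs : y ∈ Metric.sphere x₀ ε₂
      · have := hpos y hs
        rw [hsp₂ y hs]; linarith
      · have hn : R ≤ ‖y‖ := by
          by_contra hlt
          push Not at hlt
          refine g3 ⟨by simpa using hlt, fun hc => ?_⟩
          rw [← Metric.ball_union_sphere] at hc
          exact hc.elim g2 hs
        have i1 : R₁ ≤ R := le_trans (le_max_left _ _) (le_max_left _ _)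
        have i2 : R₂ ≤ R := le_trans (le_max_right _ _) (le_max_left _ _)
        have e1 := (abs_lt.1 (hR₁ y (i1.trans hn))).1
        have e2 := (abs_lt.1 (hR₂ y (i2.trans hn))).2
        linarith) x ⟨by simp [hR], hx⟩
  linarith

/-- the zero-extensions `ũ^ε` are decreasing with respect to `ε`. -/
theorem statement12 (n k : ℕ) (hn : 3 ≤ n) (hk1 : 1 ≤ k) (hkn : k ≤ n)
    (a : Fin n → ℝ) (hA : MemA n k (Matrix.diagonal a))
    (hk1' : k = 1 → (⨆ i, a i) < 1 / 2)
    (x₀ : Euc n) (hx₀ : x₀ ∈ Metric.ball (0 : Euc n) (1 / 2)) (hx₀' : x₀ ≠ 0) :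
    ∃ cstar : ℝ, 0 < cstar ∧ ∀ c : ℝ, cstar ≤ c →
      ∀ ε₁ ε₂ : ℝ, 0 < ε₁ → ε₁ < ε₂ → ε₂ < 1 / 2 →
      ∀ u₁ u₂ : Euc n → ℝ,
        ExtBallSol n k a x₀ ε₁ c u₁ → ExtBallSol n k a x₀ ε₂ c u₂ →
        ∀ x : Euc n,
          extBy n (Metric.ball x₀ ε₂) 0 u₂ x ≤ extBy n (Metric.ball x₀ ε₁) 0 u₁ x := by
  have ha : ∀ i, 0 < a i := diag_pos n k a hA
  obtain ⟨d, hd, hcoer⟩ := quad_coer n (by omega) a ha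
  have hQ := quadA_cont n a
  have hcomp : ∀ q, IsCompact {x | quadA n (Matrix.diagonal a) x ≤ q} := by
    intro q
    refine (isCompact_closedBall (0 : Euc n) (1 + q / d)).of_isClosed_subset
      (isClosed_le hQ continuous_const) fun x hx => ?_
    have h1 := (hcoer x).trans hx
    have h2 : ‖x‖ ^ 2 ≤ q / d := by rw [le_div_iff₀ hd]; linarith
    rw [mem_closedBall_zero_iff]
    nlinarith [sq_nonneg (‖x‖ - 1)]
  obtain ⟨q₁, hq₁0, hq₁⟩ : ∃ q₁ : ℝ, 0 < q₁ ∧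
      ∀ x : Euc n, ‖x‖ ≤ 1 → quadA n (Matrix.diagonal a) x < q₁ := by
    refine ⟨1 + ∑ i, a i, ?_, quad_bd n a ha⟩
    have := Finset.sum_nonneg fun i (_ : i ∈ Finset.univ) => (ha i).le
    linarith
  obtain ⟨B', hB'⟩ := (hcomp (q₁ + 1)).bddAbove_image
    (f := fun x : Euc n => 1 / 2 * ‖x - x₀‖ ^ 2) (by fun_prop)
  have hB : ∀ x, quadA n (Matrix.diagonal a) x ≤ q₁ + 1 →
      1 / 2 * ‖x - x₀‖ ^ 2 ≤ max B' 0 := fun x hx =>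
    (hB' ⟨x, hx, rfl⟩).trans (le_max_left _ _)
  obtain ⟨f, C, hf0, hfc, hfs, hfC, hfB⟩ := barrier n k hn hk1 hkn a hA hk1' (max B' 0) q₁
    (le_max_right _ _) hq₁0
  refine ⟨max 1 C, lt_of_lt_of_le one_pos (le_max_left _ _), ?_⟩
  intro c hc ε₁ ε₂ h0 h12 h2 u₁ u₂ hs₁ hs₂ x
  have hCc : C ≤ c := (le_max_right _ _).trans hc
  have hin : ∀ y ∈ Metric.closedBall x₀ ε₂, quadA n (Matrix.diagonal a) y < q₁ := by
    intro y hy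
    apply hq₁
    have e1 := Metric.mem_closedBall.1 hy
    have e2 : ‖x₀‖ < 1 / 2 := by simpa using hx₀
    have e3 : ‖y‖ ≤ ‖y - x₀‖ + ‖x₀‖ := by
      simpa using norm_add_le (y - x₀) x₀
    rw [dist_eq_norm] at e1
    linarith
  have hnn := nonneg_step n k hk1 hkn a x₀ u₁ ε₁ c q₁ C (max B' 0) f h0 hcomp
    (fun y hy => hin y (Metric.closedBall_subset_closedBall h12.le hy)) hB hs₁ hf0 hfc hfs hfC
    hfB hCc
  have hcmp := compare_step n k hk1 hkn a x₀ u₁ u₂ ε₁ ε₂ c h0 h12 hs₁ hs₂ (by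
    intro y hy
    refine hnn y (fun h => ?_) (hin y (Metric.sphere_subset_closedBall hy)).le
    rw [Metric.mem_ball] at h
    rw [Metric.mem_sphere] at hy
    linarith)
  unfold extBy
  by_cases hx2 : x ∈ Metric.ball x₀ ε₂
  · by_cases hx1 : x ∈ Metric.ball x₀ ε₁
    · rw [if_pos hx1, if_pos hx2]
    · rw [if_neg hx1, if_pos hx2]
      exact hnn x hx1 (hin x (Metric.ball_subset_closedBall hx2)).le
  · have hx1 : x ∉ Metric.ball x₀ ε₁ := fun h => hx2 (Metric.ball_subset_ball h12.le h)
    rw [if_neg hx1, if_neg hx2]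
    exact hcmp x hx2
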